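/- Let n ≥ 2 and let D be a compact convex body in Euclidean space ℝⁿ satisfying the R₁,R₂ ball-sandwich condition for some reals 0 < R₂ ≤ R₁. Then there exist a point o ∈ ℝⁿ and reals r, R with 0 < r ≤ R such that Metric.closedBall o r ⊆ D ⊆ Metric.closedBall o R and R / r ≤ R₁ / R₂ (equivalently, R/r ≤ κ₂/κ₁ where κᵢ = 1/Rᵢ). -/

import Mathlib

open Metric Set Bornology
open scoped NNReal

/-!
Let `K` be the set of centres of balls of radius `R₂` contained in `D`, a closed convex set. A ball
`closedBall x R₁ ⊇ D` forces `K ⊆ closedBall x (R₁ - R₂)`, and replacing `x` by its nearest point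
`o` in `K` only decreases the distances to points of `K`. Every boundary point of `D` lies within
`R₂` of `K`, hence within `R₁` of `o`, and a bounded set lies in the convex hull of its boundary.
-/

/-- The inner parallel body of `D` at distance `r`: the set of centres of closed balls of radius `r`
contained in `D`; in a normed space it is the Minkowski difference of `D` and `closedBall 0 r`. -/
def innerParallelBody {α : Type*} [PseudoMetricSpace α] (D : Set α) (r : ℝ) : Set α :=
  {c | closedBall c r ⊆ D}

section SeminormedGroup

variable {E : Type*} [SeminormedAddCommGroup E] {D : Set E} {r : ℝ}

lemma innerParallelBody_eq_iInter (D : Set E) (r : ℝ) :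
    innerParallelBody D r = ⋂ v ∈ closedBall (0 : E) r, (fun c => c + v) ⁻¹' D := by
  ext c
  rw [innerParallelBody, mem_ofPred_eq, ← singleton_add_closedBall_zero, singleton_add,
    image_subset_iff]
  simp [subset_def]

lemma isClosed_innerParallelBody (hD : IsClosed D) : IsClosed (innerParallelBody D r) := by
  rw [innerParallelBody_eq_iInter]
  exact isClosed_biInter fun v _ => hD.preimage (continuous_add_const v)

lemma convex_innerParallelBody [NormedSpace ℝ E] (hD : Convex ℝ D) :
    Convex ℝ (innerParallelBody D r) := by
  rw [innerParallelBody_eq_iInter]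
  exact convex_iInter₂ fun v _ => hD.translate_preimage_left v

end SeminormedGroup

section NormedSpace

variable {E : Type*} [NormedAddCommGroup E] [NormedSpace ℝ E] {D : Set E}

lemma exists_add_smul_mem_frontier (hD : IsBounded D) {y v : E} (hy : y ∈ D) (hv : v ≠ 0) :
    ∃ t : ℝ≥0, y + (t : ℝ) • v ∈ frontier D := by
  let ray : ℝ≥0 → E := fun t => y + (t : ℝ) • v
  have hray : Continuous ray := by fun_prop
  have hne_univ : ray ⁻¹' D ≠ univ := by
    obtain ⟨M, hDM⟩ := hD.subset_closedBall y
    obtain ⟨k, hk⟩ := exists_nat_gt (M / ‖v‖)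
    refine (ne_univ_iff_exists_notMem _).2 ⟨k, fun hmem => ?_⟩
    have hle : k * ‖v‖ ≤ M := by simpa [ray, norm_smul] using hDM hmem
    exact hle.not_gt ((div_lt_iff₀ (norm_pos_iff.2 hv)).1 hk)
  obtain ⟨t, ht⟩ := nonempty_frontier_iff.2 ⟨⟨0, by simpa [ray] using hy⟩, hne_univ⟩
  exact ⟨t, hray.frontier_preimage_subset D ht⟩

variable [Nontrivial E]

lemma frontier_nonempty_of_isBounded (hD : IsBounded D) (hne : D.Nonempty) :
    (frontier D).Nonempty := by
  refine nonempty_frontier_iff.2 ⟨hne, ?_⟩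
  rintro rfl
  exact NormedSpace.unbounded_univ ℝ E hD

lemma subset_convexHull_frontier (hD : IsBounded D) : D ⊆ convexHull ℝ (frontier D) := by
  intro y hy
  obtain ⟨v, hv⟩ := exists_ne (0 : E)
  obtain ⟨s, hfront⟩ := exists_add_smul_mem_frontier hD hy hv
  obtain ⟨t, hback⟩ := exists_add_smul_mem_frontier hD hy (neg_ne_zero.2 hv)
  refine segment_subset_convexHull hback hfront (mem_segment_iff_sameRay.2 ?_)
  simpa using ((SameRay.refl v).nonneg_smul_left t.2).nonneg_smul_right s.2

lemma exists_norm_eq_and_sameRay (w : E) {r : ℝ} (hr : 0 ≤ r) :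
    ∃ v : E, ‖v‖ = r ∧ SameRay ℝ w v := by
  obtain rfl | hw := eq_or_ne w 0
  · obtain ⟨v, hv⟩ := exists_norm_eq E hr
    exact ⟨v, hv, SameRay.zero_left v⟩
  · refine ⟨(r / ‖w‖) • w, ?_, SameRay.sameRay_nonneg_smul_right w (by positivity)⟩
    rw [norm_smul, Real.norm_of_nonneg (by positivity), div_mul_cancel₀ _ (norm_ne_zero_iff.2 hw)]

lemma dist_add_le_of_closedBall_subset_closedBall {c x : E} {r R : ℝ} (hr : 0 ≤ r)
    (h : closedBall c r ⊆ closedBall x R) : dist c x + r ≤ R := by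
  obtain ⟨v, rfl, hray⟩ := exists_norm_eq_and_sameRay (c - x) hr
  calc dist c x + ‖v‖ = ‖c - x + v‖ := by rw [hray.norm_add, dist_eq_norm]
    _ = dist (c + v) x := by rw [dist_eq_norm, sub_add_eq_add_sub]
    _ ≤ R := h (by simp)

lemma innerParallelBody_subset_closedBall {x : E} {r R : ℝ} (hr : 0 ≤ r)
    (hD : D ⊆ closedBall x R) : innerParallelBody D r ⊆ closedBall x (R - r) := fun _ hc =>
  le_sub_iff_add_le.2 (dist_add_le_of_closedBall_subset_closedBall hr (Subset.trans hc hD))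

end NormedSpace

section InnerProductSpace

variable {E : Type*} [NormedAddCommGroup E] [InnerProductSpace ℝ E]

lemma exists_mem_forall_dist_le_dist {K : Set E} (hne : K.Nonempty) (hcomplete : IsComplete K)
    (hconv : Convex ℝ K) (x : E) : ∃ o ∈ K, ∀ y ∈ K, dist y o ≤ dist y x := by
  obtain ⟨o, ho, hmin⟩ := exists_norm_eq_iInf_of_complete_convex hne hcomplete hconv x
  refine ⟨o, ho, fun y hy => ?_⟩
  have hobtuse : inner ℝ (x - o) (y - o) ≤ 0 :=
    (norm_eq_iInf_iff_real_inner_le_zero hconv ho).1 hmin y hy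
  rw [dist_eq_norm, dist_eq_norm]
  refine le_of_sq_le_sq ?_ (norm_nonneg _)
  calc ‖y - o‖ ^ 2 ≤ ‖y - o‖ ^ 2 - 2 * inner ℝ (y - o) (x - o) + ‖x - o‖ ^ 2 := by
        rw [real_inner_comm]
        linarith [sq_nonneg ‖x - o‖]
    _ = ‖y - x‖ ^ 2 := by rw [← norm_sub_sq_real, sub_sub_sub_cancel_right]

theorem quotient_estimate_euclidean_weak_general [CompleteSpace E] {D : Set E}
    (hconv : Convex ℝ D) (hne : D.Nonempty) {x : E} {R₁ R₂ : ℝ} (hout : D ⊆ closedBall x R₁)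
    (hroll : ∀ p ∈ frontier D, ∃ c, p ∈ closedBall c R₂ ∧ closedBall c R₂ ⊆ D) :
    ∃ o, closedBall o R₂ ⊆ D ∧ D ⊆ closedBall o R₁ := by
  rcases subsingleton_or_nontrivial E with _ | _
  · rw [hne.eq_univ] at hout ⊢
    exact ⟨x, subset_univ _, hout⟩
  have hclosed : IsClosed D :=
    frontier_subset_iff_isClosed.1 fun p hp => (hroll p hp).elim fun _ hc => hc.2 hc.1
  have hbdd : IsBounded D := isBounded_closedBall.subset hout
  obtain ⟨p, hp⟩ := frontier_nonempty_of_isBounded hbdd hne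
  obtain ⟨c, hpc, hc⟩ := hroll p hp
  have hcentres : innerParallelBody D R₂ ⊆ closedBall x (R₁ - R₂) :=
    innerParallelBody_subset_closedBall (dist_nonneg.trans hpc) hout
  obtain ⟨o, ho, hdist⟩ := exists_mem_forall_dist_le_dist ⟨c, hc⟩
    (isClosed_innerParallelBody hclosed).isComplete (convex_innerParallelBody hconv) x
  have hfrontier : frontier D ⊆ closedBall o R₁ := fun q hq => by
    obtain ⟨b, hqb, hb⟩ := hroll q hq
    calc dist q o ≤ dist q b + dist b o := dist_triangle q b o
      _ ≤ R₂ + (R₁ - R₂) := add_le_add hqb ((hdist b hb).trans (hcentres hb))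
      _ = R₁ := add_sub_cancel R₂ R₁
  exact ⟨o, ho, (subset_convexHull_frontier hbdd).trans
    (convexHull_min hfrontier (convex_closedBall o R₁))⟩

end InnerProductSpace

/-- Corollary of the quotient estimate: the boundary of a κ₁,κ₂-convex Euclidean domain
fits in a spherical shell with ratio of radii at most R₁/R₂ = κ₂/κ₁. -/
theorem quotient_estimate_euclidean_weak
    {n : ℕ} (hn : 2 ≤ n) (D : Set (EuclideanSpace ℝ (Fin n)))
    (hDcomp : IsCompact D) (hDconv : Convex ℝ D) (hDint : (interior D).Nonempty)
    (R₁ R₂ : ℝ) (hR₂ : 0 < R₂) (hR₂₁ : R₂ ≤ R₁)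
    (hsand : ∀ p ∈ frontier D, ∃ x₁ x₂ : EuclideanSpace ℝ (Fin n),
      dist x₁ p = R₁ ∧ dist x₂ p = R₂ ∧
      Metric.closedBall x₂ R₂ ⊆ D ∧ D ⊆ Metric.closedBall x₁ R₁) :
    ∃ (o : EuclideanSpace ℝ (Fin n)) (r R : ℝ), 0 < r ∧ r ≤ R ∧
      Metric.closedBall o r ⊆ D ∧ D ⊆ Metric.closedBall o R ∧
      R / r ≤ R₁ / R₂ := by
  have : Nonempty (Fin n) := ⟨⟨0, by lia⟩⟩
  have hne : D.Nonempty := hDint.mono interior_subset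
  obtain ⟨p, hp⟩ := frontier_nonempty_of_isBounded hDcomp.isBounded hne
  obtain ⟨x, -, -, -, -, hout⟩ := hsand p hp
  have hroll : ∀ q ∈ frontier D, ∃ c, q ∈ closedBall c R₂ ∧ closedBall c R₂ ⊆ D := fun q hq => by
    obtain ⟨-, c, -, hqc, hc, -⟩ := hsand q hq
    exact ⟨c, by rw [mem_closedBall', hqc], hc⟩
  obtain ⟨o, hin, hout⟩ := quotient_estimate_euclidean_weak_general hDconv hne hout hroll
  exact ⟨o, R₂, R₁, hR₂, hR₂₁, hin, hout, le_rfl⟩
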